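/- arXiv:math/9301208 — 10 statements merged into one kernel-verified Lean document; each statement's English description precedes it below -/
import Mathlib

section
/- There exists a function f : C → ℝ that is strictly increasing with respect to the lexicographic order on C; that is, ⟨C, <⟩ is order-isomorphic to a subordering of the reals. -/
/-- `D_η = {σ : ℕ → ℚ | ∀ n, σ (2n) = η n}`. -/
def Dset (η : ℕ → ℚ) : Set (ℕ → ℚ) := {σ | ∀ n, σ (2 * n) = η n}

/-- `S_η`: elements of `D_η` with `σ (2n+1) = 0` for all but finitely many `n`. -/
def Sset (η : ℕ → ℚ) : Set (ℕ → ℚ) :=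
  {σ | σ ∈ Dset η ∧ {n | σ (2 * n + 1) ≠ 0}.Finite}

/-- `C = ⋃_η S_η`. -/
def Cset : Set (ℕ → ℚ) := ⋃ η : ℕ → ℚ, Sset η

/-- The lexicographic (strict) order on `ℕ → ℚ`: `σ < τ` iff they first differ at
some index `k` and `σ k < τ k` there. -/
def lexLt (σ τ : ℕ → ℚ) : Prop := ∃ k, (∀ j < k, σ j = τ j) ∧ σ k < τ k

theorem lexLt_trans' {a b c : ℕ → ℚ} (h1 : lexLt a b) (h2 : lexLt b c) : lexLt a c := by
  obtain ⟨k, hk, hk'⟩ := h1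
  obtain ⟨l, hl, hl'⟩ := h2
  rcases lt_trichotomy k l with h | h | h
  · exact ⟨k, fun j hj => (hk j hj).trans (hl j (hj.trans h)), by rw [← hl k h]; exact hk'⟩
  · subst h
    exact ⟨k, fun j hj => (hk j hj).trans (hl j hj), hk'.trans hl'⟩
  · exact ⟨l, fun j hj => (hk j (hj.trans h)).trans (hl j hj), by rw [hk l h]; exact hl'⟩

theorem lexLt_irrefl' (a : ℕ → ℚ) : ¬ lexLt a a := by
  rintro ⟨k, _, h⟩
  exact lt_irrefl _ h

theorem lexLt_between {a b : ℕ → ℚ} (h : lexLt a b) :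
    ∃ L : List ℚ, lexLt a (fun i => L.getD i 0) ∧ lexLt (fun i => L.getD i 0) b := by
  obtain ⟨k, hk, hk'⟩ := h
  obtain ⟨q, hq1, hq2⟩ := exists_between hk'
  have e1 : ∀ j < k, ((List.range k).map a ++ [q]).getD j 0 = a j := by
    intro j hj
    simp [List.getD_eq_getElem?_getD, List.getElem?_append, hj]
  have e2 : ((List.range k).map a ++ [q]).getD k 0 = q := by
    simp [List.getD_eq_getElem?_getD, List.getElem?_append]
  refine ⟨(List.range k).map a ++ [q], ⟨k, fun j hj => (e1 j hj).symm, ?_⟩,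
    ⟨k, fun j hj => (e1 j hj).trans (hk j hj), ?_⟩⟩
  · show a k < ((List.range k).map a ++ [q]).getD k 0
    rw [e2]; exact hq1
  · show ((List.range k).map a ++ [q]).getD k 0 < b k
    rw [e2]; exact hq2

/-- `⟨C, <⟩` is order-isomorphic to a subordering of the reals: there is a function
into `ℝ` strictly increasing on `C` with respect to the lexicographic order. -/
theorem Cset_embeds_in_reals :
    ∃ f : (ℕ → ℚ) → ℝ, ∀ σ ∈ Cset, ∀ τ ∈ Cset, lexLt σ τ → f σ < f τ := by
  classical
  let F : (ℕ → ℚ) → List ℚ → ℝ := fun σ L =>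
    if lexLt (fun i => L.getD i 0) σ then (1 / 2 : ℝ) ^ Encodable.encode L else 0
  have hS : ∀ σ, Summable (F σ) := by
    intro σ
    refine Summable.of_nonneg_of_le ?_ ?_ (summable_geometric_two_encode (ι := List ℚ))
    · intro L
      simp only [F]
      split_ifs <;> positivity
    · intro L
      simp only [F]
      split_ifs
      · exact le_rfl
      · positivity
  refine ⟨fun σ => ∑' L, F σ L, fun σ _ τ _ h => ?_⟩
  obtain ⟨L, h1, h2⟩ := lexLt_between h
  refine Summable.tsum_lt_tsum (i := L) ?_ ?_ (hS σ) (hS τ)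
  · intro M
    simp only [F]
    by_cases hM : lexLt (fun i => M.getD i 0) σ
    · rw [if_pos hM, if_pos (lexLt_trans' hM h)]
    · rw [if_neg hM]
      split_ifs <;> positivity
  · simp only [F]
    rw [if_neg (fun h3 => lexLt_irrefl' _ (lexLt_trans' h1 h3)), if_pos h2]
    positivity
end

section
/- Let A, B ⊆ C be amenable. Then 𝒫(A,B) is σ-linked in the following strong sense: there exists a countable family of subsets F_n (n ∈ ℕ) of 𝒫(A,B) whose union is all of 𝒫(A,B), such that for any two conditions p, q belonging to the same F_n, the union of the graphs of p and q is the graph of a condition; in particular p and q are compatible. -/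
/-- A set `A ⊆ C` is amenable if whenever some element of `S_η` agrees with a finite
sequence `s` on all indices below `n`, some element of `A ∩ S_η` does as well. -/
def Amenable (A : Set (ℕ → ℚ)) : Prop :=
  ∀ (η : ℕ → ℚ) (n : ℕ) (s : Fin n → ℚ),
    (∃ ν ∈ Sset η, ∀ k : Fin n, ν k = s k) →
    ∃ ν ∈ A ∩ Sset η, ∀ k : Fin n, ν k = s k

/-- A condition in the forcing `𝒫(A,B)`: a finite partial injection from `A` to `B`
(given by its graph) preserving the lexicographic order and each predicate `S_η`. -/
structure Cond (A B : Set (ℕ → ℚ)) where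
  graph : Set ((ℕ → ℚ) × (ℕ → ℚ))
  finite : graph.Finite
  dom_sub : ∀ ⦃x y⦄, (x, y) ∈ graph → x ∈ A
  ran_sub : ∀ ⦃x y⦄, (x, y) ∈ graph → y ∈ B
  functional : ∀ ⦃x y y'⦄, (x, y) ∈ graph → (x, y') ∈ graph → y = y'
  injective : ∀ ⦃x x' y⦄, (x, y) ∈ graph → (x', y) ∈ graph → x = x'
  ord : ∀ ⦃x y x' y'⦄, (x, y) ∈ graph → (x', y') ∈ graph → (lexLt x x' ↔ lexLt y y')
  pres : ∀ ⦃x y⦄ (η : ℕ → ℚ), (x, y) ∈ graph → (x ∈ Sset η ↔ y ∈ Sset η)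

/-- Two conditions are compatible if some condition extends both. -/
def Compatible {A B : Set (ℕ → ℚ)} (p q : Cond A B) : Prop :=
  ∃ r : Cond A B, p.graph ⊆ r.graph ∧ q.graph ⊆ r.graph

def AgreeBelow (N : ℕ) (x y : ℕ → ℚ) : Prop := ∀ k < N, x k = y k

theorem lexLt_congr_right {N : ℕ} {x x' x'' : ℕ → ℚ} (h : ¬ AgreeBelow N x x')
    (h' : AgreeBelow N x' x'') (hl : lexLt x x') : lexLt x x'' := by
  obtain ⟨k, hk, hlt⟩ := hl
  have hkN : k < N := by
    by_contra hc
    exact h fun j hj => hk j (by omega)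
  refine ⟨k, fun j hj => ?_, ?_⟩
  · rw [hk j hj, h' j (by omega)]
  · rw [← h' k hkN]; exact hlt

theorem lexLt_congr_left {N : ℕ} {x x' x'' : ℕ → ℚ} (h : ¬ AgreeBelow N x' x)
    (h' : AgreeBelow N x' x'') (hl : lexLt x' x) : lexLt x'' x := by
  obtain ⟨k, hk, hlt⟩ := hl
  have hkN : k < N := by
    by_contra hc
    exact h fun j hj => hk j (by omega)
  refine ⟨k, fun j hj => ?_, ?_⟩
  · rw [← hk j hj, h' j (by omega)]
  · rw [← h' k hkN]; exact hlt

theorem lexLt_tail {N : ℕ} {a a' b b' : ℕ → ℚ} (ha : AgreeBelow N a a')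
    (hb : AgreeBelow N b b') (h : ∀ k, N ≤ k → a k = b k) (h' : ∀ k, N ≤ k → a' k = b' k)
    (hl : lexLt a a') : lexLt b b' := by
  obtain ⟨k, hk, hlt⟩ := hl
  have hkN : N ≤ k := by
    by_contra hc
    exact absurd (ha k (by omega)) hlt.ne
  refine ⟨k, fun j hj => ?_, ?_⟩
  · by_cases hj' : j < N
    · exact hb j hj'
    · rw [← h j (by omega), ← h' j (by omega), hk j hj]
  · rw [← h k hkN, ← h' k hkN]; exact hlt

/-- `N` is large enough for the condition `p`. -/
structure Large {A B : Set (ℕ → ℚ)} (p : Cond A B) (N : ℕ) : Prop where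
  tail : ∀ e ∈ p.graph, ∀ k, N ≤ k → e.1 k = e.2 k
  sep1 : ∀ e ∈ p.graph, ∀ e' ∈ p.graph, AgreeBelow N e.1 e'.1 → e.1 = e'.1
  sep2 : ∀ e ∈ p.graph, ∀ e' ∈ p.graph, AgreeBelow N e.2 e'.2 → e.2 = e'.2

theorem tail_ev {x y : ℕ → ℚ} {η : ℕ → ℚ} (hx : x ∈ Sset η) (hy : y ∈ Sset η) :
    ∀ᶠ N in Filter.atTop, ∀ k, N ≤ k → x k = y k := by
  obtain ⟨hx1, hx2⟩ := hx
  obtain ⟨hy1, hy2⟩ := hy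
  obtain ⟨M, hM⟩ := (hx2.union hy2).bddAbove
  filter_upwards [Filter.eventually_ge_atTop (2 * M + 2)] with N hN k hk
  obtain ⟨m, rfl | rfl⟩ := Nat.even_or_odd' k
  · rw [hx1 m, hy1 m]
  · by_contra hne
    have : m ∈ {n | x (2 * n + 1) ≠ 0} ∪ {n | y (2 * n + 1) ≠ 0} := by
      by_contra hc
      simp only [Set.mem_union, Set.mem_ofPred_eq, not_or, not_not] at hc
      exact hne (hc.1.trans hc.2.symm)
    have := hM this
    omega

theorem sep_ev (x y : ℕ → ℚ) : ∀ᶠ N in Filter.atTop, AgreeBelow N x y → x = y := by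
  by_cases h : x = y
  · exact Filter.Eventually.of_forall fun _ _ => h
  · obtain ⟨k, hk⟩ := Function.ne_iff.mp h
    filter_upwards [Filter.eventually_gt_atTop k] with N hN hA
    exact absurd (hA k hN) hk

theorem exists_large {A B : Set (ℕ → ℚ)} (hAC : A ⊆ Cset) (p : Cond A B) :
    ∃ N, Large p N := by
  have h1 : ∀ᶠ N in Filter.atTop, ∀ e ∈ p.graph, ∀ k, N ≤ k → e.1 k = e.2 k := by
    rw [Filter.eventually_all_finite p.finite]
    rintro ⟨x, y⟩ he
    obtain ⟨η, hη⟩ := Set.mem_iUnion.mp (hAC (p.dom_sub he))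
    exact tail_ev hη ((p.pres η he).mp hη)
  have h2 : ∀ᶠ N in Filter.atTop, ∀ e ∈ p.graph, ∀ e' ∈ p.graph,
      AgreeBelow N e.1 e'.1 → e.1 = e'.1 := by
    rw [Filter.eventually_all_finite p.finite]
    intro e he
    rw [Filter.eventually_all_finite p.finite]
    intro e' he'
    exact sep_ev _ _
  have h3 : ∀ᶠ N in Filter.atTop, ∀ e ∈ p.graph, ∀ e' ∈ p.graph,
      AgreeBelow N e.2 e'.2 → e.2 = e'.2 := by
    rw [Filter.eventually_all_finite p.finite]
    intro e he
    rw [Filter.eventually_all_finite p.finite]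
    intro e' he'
    exact sep_ev _ _
  obtain ⟨N, a, b, c⟩ := (h1.and (h2.and h3)).exists
  exact ⟨N, a, b, c⟩

/-- Every pair of `q` has the same restriction below `N` as some pair of `p`. -/
def Covers {A B : Set (ℕ → ℚ)} (N : ℕ) (p q : Cond A B) : Prop :=
  ∀ e ∈ q.graph, ∃ e' ∈ p.graph, AgreeBelow N e.1 e'.1 ∧ AgreeBelow N e.2 e'.2

theorem AgreeBelow.symm {N : ℕ} {x y : ℕ → ℚ} (h : AgreeBelow N x y) : AgreeBelow N y x :=
  fun k hk => (h k hk).symm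

theorem AgreeBelow.trans {N : ℕ} {x y z : ℕ → ℚ} (h : AgreeBelow N x y)
    (h' : AgreeBelow N y z) : AgreeBelow N x z :=
  fun k hk => (h k hk).trans (h' k hk)

theorem agree_iff {A B : Set (ℕ → ℚ)} {p q : Cond A B} {N : ℕ} (hp : Large p N)
    (hc : Covers N p q) {a b a' b' : ℕ → ℚ}
    (h : (a, b) ∈ p.graph) (h' : (a', b') ∈ q.graph) :
    AgreeBelow N a a' ↔ AgreeBelow N b b' := by
  obtain ⟨⟨u, v⟩, huv, h1, h2⟩ := hc _ h'
  constructor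
  · intro hag
    have : a = u := hp.sep1 _ h _ huv (hag.trans h1)
    subst this
    rw [p.functional h huv]
    exact h2.symm
  · intro hag
    have : b = v := hp.sep2 _ h _ huv (hag.trans h2)
    subst this
    rw [p.injective h huv]
    exact h1.symm

theorem eq_iff_cross {A B : Set (ℕ → ℚ)} {p q : Cond A B} {N : ℕ} (hp : Large p N)
    (hq : Large q N) (hc : Covers N p q) {a b a' b' : ℕ → ℚ}
    (h : (a, b) ∈ p.graph) (h' : (a', b') ∈ q.graph) : a = a' ↔ b = b' := by
  have key := agree_iff hp hc h h'
  have t1 := hp.tail _ h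
  have t2 := hq.tail _ h'
  simp only at t1 t2
  constructor
  · rintro rfl
    funext k
    by_cases hk : k < N
    · exact key.mp (fun _ _ => rfl) k hk
    · rw [← t1 k (by omega), ← t2 k (by omega)]
  · rintro rfl
    funext k
    by_cases hk : k < N
    · exact key.mpr (fun _ _ => rfl) k hk
    · rw [t1 k (by omega), t2 k (by omega)]

theorem ord_cross {A B : Set (ℕ → ℚ)} {p q : Cond A B} {N : ℕ} (hp : Large p N)
    (hq : Large q N) (hc : Covers N p q) {a b a' b' : ℕ → ℚ}
    (h : (a, b) ∈ p.graph) (h' : (a', b') ∈ q.graph) :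
    (lexLt a a' ↔ lexLt b b') ∧ (lexLt a' a ↔ lexLt b' b) := by
  have key := agree_iff hp hc h h'
  have t1 := hp.tail _ h
  have t2 := hq.tail _ h'
  simp only at t1 t2
  have t1' := fun k hk => (t1 k hk).symm
  have t2' := fun k hk => (t2 k hk).symm
  by_cases hag : AgreeBelow N a a'
  · have hb := key.mp hag
    exact ⟨⟨lexLt_tail hag hb t1 t2, lexLt_tail hb hag t1' t2'⟩,
      ⟨lexLt_tail hag.symm hb.symm t2 t1, lexLt_tail hb.symm hag.symm t2' t1'⟩⟩
  · have hb : ¬ AgreeBelow N b b' := fun hb => hag (key.mpr hb)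
    obtain ⟨⟨u, v⟩, huv, h1, h2⟩ := hc _ h'
    simp only at h1 h2
    have hau : ¬ AgreeBelow N a u := fun x => hag (x.trans h1.symm)
    have hbv : ¬ AgreeBelow N b v := fun x => hb (x.trans h2.symm)
    refine ⟨⟨fun hl => ?_, fun hl => ?_⟩, ⟨fun hl => ?_, fun hl => ?_⟩⟩
    · exact lexLt_congr_right hbv h2.symm ((p.ord h huv).mp (lexLt_congr_right hag h1 hl))
    · exact lexLt_congr_right hau h1.symm ((p.ord h huv).mpr (lexLt_congr_right hb h2 hl))
    · exact lexLt_congr_left (fun x => hbv x.symm) h2.symm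
        ((p.ord huv h).mp (lexLt_congr_left (fun x => hag x.symm) h1 hl))
    · exact lexLt_congr_left (fun x => hau x.symm) h1.symm
        ((p.ord huv h).mpr (lexLt_congr_left (fun x => hb x.symm) h2 hl))

theorem exists_union {A B : Set (ℕ → ℚ)} {p q : Cond A B} {N : ℕ} (hp : Large p N)
    (hq : Large q N) (hc : Covers N p q) :
    ∃ r : Cond A B, r.graph = p.graph ∪ q.graph := by
  refine ⟨⟨p.graph ∪ q.graph, p.finite.union q.finite, ?_, ?_, ?_, ?_, ?_, ?_⟩, rfl⟩
  · rintro x y (h | h)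
    exacts [p.dom_sub h, q.dom_sub h]
  · rintro x y (h | h)
    exacts [p.ran_sub h, q.ran_sub h]
  · rintro x y y' (h | h) (h' | h')
    · exact p.functional h h'
    · exact (eq_iff_cross hp hq hc h h').mp rfl
    · exact ((eq_iff_cross hp hq hc h' h).mp rfl).symm
    · exact q.functional h h'
  · rintro x x' y (h | h) (h' | h')
    · exact p.injective h h'
    · exact (eq_iff_cross hp hq hc h h').mpr rfl
    · exact ((eq_iff_cross hp hq hc h' h).mpr rfl).symm
    · exact q.injective h h'
  · rintro x y x' y' (h | h) (h' | h')
    · exact p.ord h h'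
    · exact (ord_cross hp hq hc h h').1
    · exact (ord_cross hp hq hc h' h).2
    · exact q.ord h h'
  · rintro x y η (h | h)
    exacts [p.pres η h, q.pres η h]

/-- Restriction of a pair below `N`. -/
def restr (N : ℕ) (e : (ℕ → ℚ) × (ℕ → ℚ)) : (Fin N → ℚ) × (Fin N → ℚ) :=
  (fun i => e.1 i, fun i => e.2 i)

theorem covers_of_restr {A B : Set (ℕ → ℚ)} {p q : Cond A B} {N : ℕ}
    (h : Set.image (restr N) p.graph = Set.image (restr N) q.graph) : Covers N p q := by
  intro e he
  have : restr N e ∈ Set.image (restr N) p.graph := by rw [h]; exact ⟨e, he, rfl⟩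
  obtain ⟨e', he', heq⟩ := this
  refine ⟨e', he', fun k hk => ?_, fun k hk => ?_⟩
  · exact (congrFun (congrArg Prod.fst heq) ⟨k, hk⟩).symm
  · exact (congrFun (congrArg Prod.snd heq) ⟨k, hk⟩).symm

/-- For amenable `A, B ⊆ C`, the forcing `𝒫(A,B)` is σ-linked: it is a countable
union of sets `F n` such that the union of the graphs of any two conditions in the
same `F n` is again the graph of a condition; in particular they are compatible. -/
theorem cond_sigma_linked (A B : Set (ℕ → ℚ)) (hAC : A ⊆ Cset) (hBC : B ⊆ Cset)
    (hA : Amenable A) (hB : Amenable B) :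
    ∃ F : ℕ → Set (Cond A B),
      (∀ p : Cond A B, ∃ n, p ∈ F n) ∧
      ∀ n : ℕ, ∀ p ∈ F n, ∀ q ∈ F n,
        (∃ r : Cond A B, r.graph = p.graph ∪ q.graph) ∧ Compatible p q := by
  obtain ⟨f, hf⟩ := exists_injective_nat
    (Σ N : ℕ, Finset ((Fin N → ℚ) × (Fin N → ℚ)))
  refine ⟨fun n => {p | ∃ (N : ℕ) (T : Finset ((Fin N → ℚ) × (Fin N → ℚ))),
    f ⟨N, T⟩ = n ∧ Large p N ∧ Set.image (restr N) p.graph = ↑T}, fun p => ?_, ?_⟩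
  · obtain ⟨N, hN⟩ := exists_large hAC p
    exact ⟨_, N, (p.finite.image (restr N)).toFinset, rfl, hN, by simp⟩
  · rintro n p ⟨N, T, h1, hp, hT⟩ q ⟨N', T', h1', hq, hT'⟩
    have := hf (h1.trans h1'.symm)
    cases this
    obtain ⟨r, hr⟩ := exists_union hp hq (covers_of_restr (hT.trans hT'.symm))
    exact ⟨⟨r, hr⟩, r, by simp [hr], by simp [hr]⟩
end

section
/- Let A, B ⊆ C be amenable. Then the partial order 𝒫(A,B) satisfies the countable chain condition: every set of pairwise incompatible conditions is countable. -/
/-- Restriction to the indices below `N`. -/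
def truncPair (N : ℕ) (x : (ℕ → ℚ) × (ℕ → ℚ)) : (Fin N → ℚ) × (Fin N → ℚ) :=
  (fun k => x.1 k, fun k => x.2 k)

/-- `N` is large enough for `p`, and `F` is the set of truncations of `p` at `N`. -/
structure GoodType {A B : Set (ℕ → ℚ)} (p : Cond A B) (N : ℕ)
    (F : Finset ((Fin N → ℚ) × (Fin N → ℚ))) : Prop where
  sepL : ∀ u ∈ p.graph, ∀ v ∈ p.graph, (∀ k < N, u.1 k = v.1 k) → u.1 = v.1
  sepR : ∀ u ∈ p.graph, ∀ v ∈ p.graph, (∀ k < N, u.2 k = v.2 k) → u.2 = v.2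
  zero : ∀ u ∈ p.graph, ∀ n, N ≤ 2 * n + 1 → u.1 (2 * n + 1) = 0 ∧ u.2 (2 * n + 1) = 0
  img : (F : Set ((Fin N → ℚ) × (Fin N → ℚ))) = truncPair N '' p.graph

lemma even_eq {A B : Set (ℕ → ℚ)} (hAC : A ⊆ Cset) (p : Cond A B) {x y : ℕ → ℚ}
    (h : (x, y) ∈ p.graph) (n : ℕ) : x (2 * n) = y (2 * n) := by
  obtain ⟨η, hη⟩ := Set.mem_iUnion.1 (hAC (p.dom_sub h))
  have := (p.pres η h).1 hη
  rw [hη.1 n, this.1 n]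

lemma eventually_sep (x y : ℕ → ℚ) :
    ∀ᶠ N in Filter.atTop, (∀ k < N, x k = y k) → x = y := by
  by_cases h : x = y
  · exact Filter.Eventually.of_forall fun _ _ => h
  · obtain ⟨k, hk⟩ := Function.ne_iff.1 h
    filter_upwards [Filter.eventually_gt_atTop k] with N hN hh
    exact absurd (hh k hN) hk

lemma eventually_zero {x : ℕ → ℚ} (hx : x ∈ Cset) :
    ∀ᶠ N in Filter.atTop, ∀ n, N ≤ 2 * n + 1 → x (2 * n + 1) = 0 := by
  obtain ⟨η, hη⟩ := Set.mem_iUnion.1 hx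
  obtain ⟨M, hM⟩ := hη.2.bddAbove
  filter_upwards [Filter.eventually_gt_atTop (2 * M + 1)] with N hN n hn
  by_contra h
  have : n ≤ M := hM h
  omega

lemma exists_goodType {A B : Set (ℕ → ℚ)} (hAC : A ⊆ Cset) (hBC : B ⊆ Cset) (p : Cond A B) :
    ∃ t : (Σ N : ℕ, Finset ((Fin N → ℚ) × (Fin N → ℚ))), GoodType p t.1 t.2 := by
  have h1 : ∀ᶠ N in Filter.atTop, ∀ u ∈ p.graph, ∀ v ∈ p.graph,
      (∀ k < N, u.1 k = v.1 k) → u.1 = v.1 :=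
    (Filter.eventually_all_finite p.finite).2 fun u _ =>
      (Filter.eventually_all_finite p.finite).2 fun v _ => eventually_sep _ _
  have h2 : ∀ᶠ N in Filter.atTop, ∀ u ∈ p.graph, ∀ v ∈ p.graph,
      (∀ k < N, u.2 k = v.2 k) → u.2 = v.2 :=
    (Filter.eventually_all_finite p.finite).2 fun u _ =>
      (Filter.eventually_all_finite p.finite).2 fun v _ => eventually_sep _ _
  have h3 : ∀ᶠ N in Filter.atTop, ∀ u ∈ p.graph, 
      (∀ n, N ≤ 2 * n + 1 → u.1 (2 * n + 1) = 0) ∧ (∀ n, N ≤ 2 * n + 1 → u.2 (2 * n + 1) = 0) :=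
    (Filter.eventually_all_finite p.finite).2 fun u hu =>
      (eventually_zero (hAC (p.dom_sub hu))).and (eventually_zero (hBC (p.ran_sub hu)))
  obtain ⟨N, h1, h2, h3⟩ := (h1.and (h2.and h3)).exists
  have hf := p.finite.image (truncPair N)
  exact ⟨⟨N, hf.toFinset⟩, h1, h2, fun u hu n hn => ⟨(h3 u hu).1 n hn, (h3 u hu).2 n hn⟩,
    hf.coe_toFinset⟩

lemma GoodType.partner {A B : Set (ℕ → ℚ)} {p q : Cond A B} {N : ℕ}
    {F : Finset ((Fin N → ℚ) × (Fin N → ℚ))} (hp : GoodType p N F) (hq : GoodType q N F)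
    {x y : ℕ → ℚ} (h : (x, y) ∈ q.graph) :
    ∃ x' y', (x', y') ∈ p.graph ∧ (∀ k < N, x' k = x k) ∧ (∀ k < N, y' k = y k) := by
  have : truncPair N (x, y) ∈ truncPair N '' p.graph := by
    rw [← hp.img, hq.img]; exact Set.mem_image_of_mem _ h
  obtain ⟨⟨x', y'⟩, h', e⟩ := this
  refine ⟨x', y', h', fun k hk => ?_, fun k hk => ?_⟩
  · exact congrFun (congrArg Prod.fst e) ⟨k, hk⟩
  · exact congrFun (congrArg Prod.snd e) ⟨k, hk⟩

lemma lexLt_congr_right_s5 {N : ℕ} {x z w : ℕ → ℚ} (hzw : ∀ k < N, z k = w k)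
    (hne : ¬ ∀ k < N, x k = z k) (h : lexLt x z) : lexLt x w := by
  obtain ⟨k, hk, hlt⟩ := h
  have hkN : k < N := by
    by_contra hc
    exact hne fun j hj => hk j (by omega)
  exact ⟨k, fun j hj => by rw [hk j hj, hzw j (by omega)], by rwa [← hzw k hkN]⟩

lemma lexLt_of_coord {x x' y y' : ℕ → ℚ} (he : ∀ k, x k = x' k ↔ y k = y' k)
    (hl : ∀ k, x k < x' k ↔ y k < y' k) : lexLt x x' ↔ lexLt y y' := by
  simp only [lexLt, he, hl]

lemma GoodType.key {A B : Set (ℕ → ℚ)} (hAC : A ⊆ Cset) {p q : Cond A B} {N : ℕ}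
    {F : Finset ((Fin N → ℚ) × (Fin N → ℚ))} (hp : GoodType p N F) (hq : GoodType q N F)
    {x y x' y' : ℕ → ℚ} (h : (x, y) ∈ p.graph) (h' : (x', y') ∈ q.graph) :
    (x = x' ↔ y = y') ∧ (lexLt x x' ↔ lexLt y y') := by
  obtain ⟨z, w, hzw, hz, hw⟩ := hp.partner hq h'
  by_cases hx : ∀ k < N, x k = x' k
  · have hxz : x = z := hp.sepL _ h _ hzw fun k hk => (hx k hk).trans (hz k hk).symm
    subst hxz
    have hyw : y = w := p.functional h hzw
    subst hyw
    have hc : ∀ k, (x k = x' k ∧ y k = y' k) ∨ (x k = y k ∧ x' k = y' k) := by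
      intro k
      by_cases hk : k < N
      · exact Or.inl ⟨hz k hk, hw k hk⟩
      · obtain ⟨n, rfl | rfl⟩ := Nat.even_or_odd' k
        · exact Or.inr ⟨even_eq hAC p h n, even_eq hAC q h' n⟩
        · have a := hp.zero _ h n (by omega)
          have b := hq.zero _ h' n (by omega)
          simp only at a b
          left
          rw [a.1, a.2, b.1, b.2]
          simp
    have he : ∀ k, x k = x' k ↔ y k = y' k := by
      intro k
      rcases hc k with ⟨a, b⟩ | ⟨a, b⟩
      · simp [a, b]
      · rw [a, b]
    refine ⟨by simp only [funext_iff, he], lexLt_of_coord he ?_⟩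
    intro k
    rcases hc k with ⟨a, b⟩ | ⟨a, b⟩
    · simp [a, b]
    · rw [a, b]
  · have hy : ¬ ∀ k < N, y k = y' k := by
      intro hy
      have hyw : y = w := hp.sepR _ h _ hzw fun k hk => (hy k hk).trans (hw k hk).symm
      subst hyw
      have : x = z := p.injective h hzw
      subst this
      exact hx hz
    have hxz : ¬ ∀ k < N, x k = z k := fun hh => hx fun k hk => (hh k hk).trans (hz k hk)
    have hyw : ¬ ∀ k < N, y k = w k := fun hh => hy fun k hk => (hh k hk).trans (hw k hk)
    refine ⟨⟨fun e => (hx fun k _ => by rw [e]).elim, fun e => (hy fun k _ => by rw [e]).elim⟩,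
      fun hl => ?_, fun hl => ?_⟩
    · exact lexLt_congr_right_s5 hw hyw ((p.ord h hzw).1
        (lexLt_congr_right_s5 (fun k hk => (hz k hk).symm) hx hl))
    · exact lexLt_congr_right_s5 hz hxz ((p.ord h hzw).2
        (lexLt_congr_right_s5 (fun k hk => (hw k hk).symm) hy hl))

lemma GoodType.compatible {A B : Set (ℕ → ℚ)} (hAC : A ⊆ Cset) {p q : Cond A B} {N : ℕ}
    {F : Finset ((Fin N → ℚ) × (Fin N → ℚ))} (hp : GoodType p N F) (hq : GoodType q N F) :
    Compatible p q := by
  have K : ∀ ⦃x y x' y'⦄, (x, y) ∈ p.graph ∪ q.graph → (x', y') ∈ p.graph ∪ q.graph →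
      (x = x' ↔ y = y') ∧ (lexLt x x' ↔ lexLt y y') := by
    rintro x y x' y' (h | h) (h' | h')
    · exact hp.key hAC hp h h'
    · exact hp.key hAC hq h h'
    · exact hq.key hAC hp h h'
    · exact hq.key hAC hq h h'
  refine ⟨{ graph := p.graph ∪ q.graph
            finite := p.finite.union q.finite
            dom_sub := ?_
            ran_sub := ?_
            functional := fun x y y' h h' => (K h h').1.1 rfl
            injective := fun x x' y h h' => (K h h').1.2 rfl
            ord := fun x y x' y' h h' => (K h h').2
            pres := ?_ }, Set.subset_union_left, Set.subset_union_right⟩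
  · rintro x y (h | h)
    exacts [p.dom_sub h, q.dom_sub h]
  · rintro x y (h | h)
    exacts [p.ran_sub h, q.ran_sub h]
  · rintro x y η (h | h)
    exacts [p.pres η h, q.pres η h]

/-- For amenable `A, B ⊆ C`, the forcing `𝒫(A,B)` satisfies the countable chain
condition: every set of pairwise incompatible conditions is countable. -/
theorem cond_ccc (A B : Set (ℕ → ℚ)) (hAC : A ⊆ Cset) (hBC : B ⊆ Cset)
    (hA : Amenable A) (hB : Amenable B) :
    ∀ S : Set (Cond A B),
      (∀ p ∈ S, ∀ q ∈ S, p ≠ q → ¬ Compatible p q) → S.Countable := by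
  intro S hS
  choose f hf using fun p : Cond A B => exists_goodType hAC hBC p
  refine Set.MapsTo.countable_of_injOn (f := f) (Set.mapsTo_univ f S) ?_ Set.countable_univ
  intro p hp q hq hpq
  by_contra hne
  have h := hf q
  rw [← hpq] at h
  exact hS p hp q hq hne ((hf p).compatible hAC h)
end

section
/- Suppose B ⊆ C is a set that meets each S_η in at most one point, i.e., for every η : ℕ → ℚ the set B ∩ S_η has at most one element. Then A = C \ B is amenable. -/
/-- If `B ⊆ C` meets each `S_η` in at most one point, then `C \\ B` is amenable. -/
theorem amenable_of_small_complement (B : Set (ℕ → ℚ)) (hB : B ⊆ Cset)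
    (h : ∀ η : ℕ → ℚ, (B ∩ Sset η).Subsingleton) :
    Amenable (Cset \ B) := by
  rintro η n s ⟨ν, hν, hs⟩
  by_cases hb : ν ∈ B
  · have hS : Function.update ν (2 * n + 1) (ν (2 * n + 1) + 1) ∈ Sset η := by
      refine ⟨fun m => ?_, (hν.2.union (Set.finite_singleton n)).subset ?_⟩
      · rw [Function.update_of_ne (by omega)]
        exact hν.1 m
      · intro m hm
        by_cases hmn : m = n
        · exact Or.inr hmn
        · left
          simp only [Set.mem_setOf_eq] at hm ⊢
          rwa [Function.update_of_ne (by omega)] at hm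
    refine ⟨_, ⟨⟨Set.mem_iUnion.2 ⟨η, hS⟩, fun hB' => ?_⟩, hS⟩, fun k => ?_⟩
    · have h1 := congrFun (h η ⟨hB', hS⟩ ⟨hb, hν⟩) (2 * n + 1)
      simp at h1
    · rw [Function.update_of_ne (by omega)]
      exact hs k
  · exact ⟨ν, ⟨⟨Set.mem_iUnion.2 ⟨η, hν⟩, hb⟩, hν⟩, hs⟩
end

section
/- Suppose B ⊆ C meets each S_η in at most one point, i.e., for every η : ℕ → Bool the set B ∩ S_η has at most one element. Then M = C \ B is amenable. -/
/-- `D_η = {σ : ℕ → Bool | ∀ n, σ (2n) = η n}` in Cantor space. -/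
def DsetB (η : ℕ → Bool) : Set (ℕ → Bool) := {σ | ∀ n, σ (2 * n) = η n}

/-- `b_η` is the element of `D_η` with `b_η (2n) = η n` and `b_η (2n+1) = 1`. -/
def bfun (η : ℕ → Bool) : ℕ → Bool := fun n => if n % 2 = 0 then η (n / 2) else true

/-- `S_η`: elements of `D_η` with `σ (2n+1) = 0` for all but finitely many `n`,
together with the extra point `b_η`. -/
def SsetB (η : ℕ → Bool) : Set (ℕ → Bool) :=
  {σ | σ ∈ DsetB η ∧ {n | σ (2 * n + 1) ≠ false}.Finite} ∪ {bfun η}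

/-- `C = ⋃_η S_η`. -/
def CsetB : Set (ℕ → Bool) := ⋃ η : ℕ → Bool, SsetB η

/-- `E_i (σ, τ)` holds iff `σ` and `τ` agree below `i`. -/
def Erel (i : ℕ) (σ τ : ℕ → Bool) : Prop := ∀ k < i, σ k = τ k

/-- A set `M ⊆ C` is amenable if whenever some element of `S_η` agrees with a finite
sequence `s` on all indices below `n`, some element of `M ∩ S_η` does as well. -/
def AmenableB (M : Set (ℕ → Bool)) : Prop :=
  ∀ (η : ℕ → Bool) (n : ℕ) (s : Fin n → Bool),
    (∃ ν ∈ SsetB η, ∀ k : Fin n, ν k = s k) →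
    ∃ ν ∈ M ∩ SsetB η, ∀ k : Fin n, ν k = s k

/-- If `B ⊆ C` meets each `S_η` in at most one point, then `C \\ B` is amenable. -/
theorem amenableB_of_small_complement (B : Set (ℕ → Bool)) (hB : B ⊆ CsetB)
    (h : ∀ η : ℕ → Bool, (B ∩ SsetB η).Subsingleton) :
    AmenableB (CsetB \ B) := by
  rintro η n s ⟨ν, hν, hs⟩
  have hD : ∀ m, ν (2 * m) = η m := by
    rcases hν with hν | hν
    · exact hν.1
    · intro m
      rw [Set.mem_singleton_iff.1 hν]
      simp [bfun]
  let g : Bool → ℕ → Bool := fun b k =>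
    if k < n then ν k else if k % 2 = 0 then η (k / 2) else if k = 2 * n + 1 then b else false
  have hgS : ∀ b, g b ∈ SsetB η := by
    intro b
    refine Or.inl ⟨?_, ?_⟩
    · intro m
      by_cases hm : 2 * m < n
      · simp [g, hm, hD]
      · simp [g, hm]
    · refine (Set.finite_Iic n).subset ?_
      intro m hm
      by_contra hlt
      have hlt' : n < m := by simpa using hlt
      apply hm
      have h1 : ¬ (2 * m + 1 < n) := by omega
      have h2 : ¬ ((2 * m + 1) % 2 = 0) := by omega
      have h3 : ¬ (2 * m + 1 = 2 * n + 1) := by omega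
      simp only [g, if_neg h1, if_neg h2, if_neg h3]
  have hgs : ∀ b, ∀ k : Fin n, g b k = s k := by
    intro b k
    simp [g, hs]
  have hval : ∀ b, g b (2 * n + 1) = b := by
    intro b
    have h1 : ¬ (2 * n + 1 < n) := by omega
    have h2 : ¬ ((2 * n + 1) % 2 = 0) := by omega
    simp only [g, if_neg h1, if_neg h2, if_true]
  have hex : ∃ b, g b ∉ B := by
    by_contra hcon
    push Not at hcon
    have heq := h η ⟨hcon true, hgS true⟩ ⟨hcon false, hgS false⟩
    have := congrFun heq (2 * n + 1)
    rw [hval, hval] at this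
    exact absurd this (by decide)
  obtain ⟨b, hb⟩ := hex
  exact ⟨g b, ⟨⟨Set.mem_iUnion.2 ⟨η, hgS b⟩, hb⟩, hgS b⟩, hgs b⟩
end

section
/- There exists a subset M₀ ⊆ C such that (1) for every η : ℕ → Bool the set S_η \ M₀ has at most one element (hence M₀ is amenable), and (2) M₀ is rigid: every E-preserving bijection from M₀ onto M₀ is the identity. -/
open Cardinal in
/-- Transfinite selection avoiding countable conflicts. -/
theorem RA_select {T X : Type} (hT : #T ≤ 𝔠) (A : T → Set X) (hA : ∀ t, 𝔠 ≤ #(A t))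
    (bad : T → T → X → X → Prop) (hsymm : ∀ s t x y, bad s t x y → bad t s y x)
    (hc : ∀ s t y, {x | bad s t y x}.Countable) :
    ∃ x : T → X, (∀ t, x t ∈ A t) ∧ ∀ s t, s ≠ t → ¬ bad s t (x s) (x t) := by
  classical
  obtain ⟨r, wo, hr⟩ := Cardinal.exists_ord_eq T
  have hseg : ∀ t, #{s // r s t} < 𝔠 := by
    intro t
    refine lt_of_lt_of_le ?_ hT
    have := Ordinal.typein_lt_type r t
    rw [← hr, Cardinal.lt_ord] at this
    rwa [Ordinal.card_typein] at this
  have step : ∀ (t : T) (p : (s : T) → r s t → X),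
      ∃ x ∈ A t, ∀ s (h : r s t), ¬ bad s t (p s h) x := by
    intro t p
    by_contra hcon
    push Not at hcon
    have hsub : A t ⊆ ⋃ s : {s // r s t}, {x | bad s.1 t (p s.1 s.2) x} := by
      intro x hx
      obtain ⟨s, h, hb⟩ := hcon x hx
      exact Set.mem_iUnion.2 ⟨⟨s, h⟩, hb⟩
    have h1 := (hA t).trans (Cardinal.mk_le_mk_of_subset hsub)
    have h2 : #(⋃ s : {s // r s t}, {x | bad s.1 t (p s.1 s.2) x}) ≤ #{s // r s t} * ℵ₀ := by
      refine (Cardinal.mk_iUnion_le _).trans ?_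
      gcongr
      refine ciSup_le' fun s => ?_
      exact (hc s.1 t _).le_aleph0
    have h3 : #{s // r s t} * ℵ₀ < 𝔠 :=
      Cardinal.mul_lt_of_lt Cardinal.aleph0_le_continuum (hseg t) Cardinal.aleph0_lt_continuum
    exact absurd (h1.trans h2) (not_le.2 h3)
  choose g hg1 hg2 using step
  let x : T → X := wo.wf.fix g
  have hx : ∀ t, x t = g t (fun s _ => x s) := fun t => wo.wf.fix_eq g t
  refine ⟨x, fun t => by rw [hx]; exact hg1 _ _, ?_⟩
  have key : ∀ s t, r s t → ¬ bad s t (x s) (x t) := by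
    intro s t h
    rw [hx t]
    exact hg2 t (fun s _ => x s) s h
  intro s t hne hb
  rcases trichotomous_of r s t with h | h | h
  · exact key s t h hb
  · exact hne h
  · exact key t s h (hsymm _ _ _ _ hb)

def RA_F (φ : List Bool → Bool) (σ : ℕ → Bool) : ℕ → Bool :=
  fun k => φ (List.ofFn (fun i : Fin (k + 1) => σ i))

theorem RA_F_congr (φ : List Bool → Bool) {σ τ : ℕ → Bool} {k : ℕ}
    (h : ∀ j < k + 1, σ j = τ j) : RA_F φ σ k = RA_F φ τ k := by
  unfold RA_F
  congr 2
  funext i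
  exact h i i.2

def RA_e (σ : ℕ → Bool) : ℕ → Bool := fun n => σ (2 * n)

theorem RA_e_of_mem {η σ : ℕ → Bool} (h : σ ∈ SsetB η) : RA_e σ = η := by
  rcases h with h | h
  · exact funext h.1
  · rw [Set.mem_singleton_iff.1 h]
    funext n
    simp [RA_e, bfun]

theorem RA_mem_C {σ : ℕ → Bool} (h : σ ∈ CsetB) : σ ∈ SsetB (RA_e σ) := by
  obtain ⟨η, hη⟩ := Set.mem_iUnion.1 h
  rwa [RA_e_of_mem hη]

theorem RA_S_of_finite {σ : ℕ → Bool} (n : ℕ) (h : ∀ m, n ≤ m → σ (2 * m + 1) = false) :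
    σ ∈ SsetB (RA_e σ) := by
  left
  refine ⟨fun _ => rfl, (Set.finite_lt_nat n).subset ?_⟩
  intro m hm
  by_contra hlt
  exact hm (h m (not_lt.1 hlt))

theorem RA_S_countable (η : ℕ → Bool) : (SsetB η).Countable := by
  refine Set.Countable.union ?_ (Set.countable_singleton _)
  have hc : {s : Set ℕ | s.Finite}.Countable := Set.Countable.ofPred_finite
  refine Set.MapsTo.countable_of_injOn (f := fun σ : ℕ → Bool => {n | σ (2 * n + 1) ≠ false})
    (t := {s : Set ℕ | s.Finite}) (fun σ hσ => hσ.2) ?_ hc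
  intro σ hσ τ hτ h
  funext j
  rcases Nat.even_or_odd' j with ⟨m, rfl | rfl⟩
  · rw [hσ.1 m, hτ.1 m]
  · have := Set.ext_iff.1 h m
    simp only [Set.mem_ofPred_eq] at this
    cases h1 : σ (2 * m + 1) <;> cases h2 : τ (2 * m + 1) <;> simp_all

theorem RA_dense {M : Set (ℕ → Bool)} (hM : ∀ η : ℕ → Bool, (SsetB η \ M).Subsingleton)
    (σ : ℕ → Bool) (n : ℕ) : ∃ x ∈ M ∩ SsetB (RA_e σ), ∀ k < n, x k = σ k := by
  let x : Bool → ℕ → Bool := fun b j =>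
    if j < n then σ j else if j % 2 = 0 then σ j else if j = 2 * n + 1 then b else false
  have he : ∀ b, RA_e (x b) = RA_e σ := by
    intro b
    funext m
    simp [RA_e, x]
  have hS : ∀ b, x b ∈ SsetB (RA_e σ) := by
    intro b
    rw [← he b]
    refine RA_S_of_finite (n + 1) fun m hm => ?_
    have h1 : ¬ (2 * m + 1 < n) := by omega
    have h2 : ¬ (m = n) := by omega
    have h3 : (2 * m + 1) % 2 ≠ 0 := by omega
    simp [x, h1, h2]
  have hag : ∀ b, ∀ k < n, x b k = σ k := by
    intro b k hk
    simp [x, hk]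
  by_cases h : x true ∈ M
  · exact ⟨_, ⟨h, hS _⟩, hag _⟩
  by_cases h' : x false ∈ M
  · exact ⟨_, ⟨h', hS _⟩, hag _⟩
  have := congrFun (hM _ ⟨hS true, h⟩ ⟨hS false, h'⟩) (2 * n + 1)
  have h1 : ¬ (2 * n + 1 < n) := by omega
  simp [x, h1] at this

open Cardinal in
theorem RA_card_moved (φ : List Bool → Bool) (hφ : ∃ σ, RA_F φ σ ≠ σ) :
    𝔠 ≤ #{x | x ∈ CsetB ∧ RA_F φ x ≠ x} := by
  obtain ⟨σ, hσ⟩ := hφ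
  obtain ⟨k, hk⟩ := Function.ne_iff.1 hσ
  let x : (ℕ → Bool) → ℕ → Bool := fun η j =>
    if j < k + 1 then σ j else if j % 2 = 0 then η (j / 2 - (k + 1)) else false
  have hag : ∀ η, ∀ j < k + 1, x η j = σ j := by
    intro η j hj
    simp only [x, if_pos hj]
  have hmem : ∀ η, x η ∈ CsetB ∧ RA_F φ (x η) ≠ x η := by
    intro η
    refine ⟨Set.mem_iUnion.2 ⟨_, RA_S_of_finite (k + 1) fun m hm => ?_⟩, fun h => hk ?_⟩
    · have h1 : ¬ (2 * m + 1 < k + 1) := by omega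
      have h3 : (2 * m + 1) % 2 ≠ 0 := by omega
      simp only [x, h1, h3, if_false]
    · rw [← RA_F_congr φ (hag η), h, hag η k (by omega)]
  have hinj : Function.Injective (fun η => (⟨x η, hmem η⟩ : {x | x ∈ CsetB ∧ RA_F φ x ≠ x})) := by
    intro η η' h
    funext n
    have := congrFun (congrArg Subtype.val h) (2 * (n + k + 1))
    have h1 : ¬ (2 * (n + k + 1) < k + 1) := by omega
    have h2 : (2 * (n + k + 1)) / 2 - (k + 1) = n := by omega
    have h3 : (2 * (n + k + 1)) % 2 = 0 := by omega
    simpa only [x, h1, h2, h3, if_false, if_true] using this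
  refine le_trans (le_of_eq ?_) (Cardinal.mk_le_of_injective hinj)
  simp

/-- There is an `M₀ ⊆ C` missing at most one point of each `S_η` (hence amenable)
that is rigid: every `E`-preserving bijection of `M₀` onto itself is the identity. -/
theorem exists_rigid_amenable :
    ∃ M₀ : Set (ℕ → Bool), M₀ ⊆ CsetB ∧
      (∀ η : ℕ → Bool, (SsetB η \ M₀).Subsingleton) ∧
      AmenableB M₀ ∧
      ∀ f : (ℕ → Bool) → (ℕ → Bool), Set.BijOn f M₀ M₀ →
        (∀ σ ∈ M₀, ∀ τ ∈ M₀, ∀ i : ℕ, Erel i σ τ ↔ Erel i (f σ) (f τ)) →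
        ∀ x ∈ M₀, f x = x := by
  classical
  let T := {φ : List Bool → Bool // Function.Injective (RA_F φ) ∧ ∃ σ, RA_F φ σ ≠ σ}
  obtain ⟨x, hxA, hxb⟩ := RA_select (T := T) (X := ℕ → Bool)
    (by
      refine (Cardinal.mk_subtype_le _).trans ?_
      simp)
    (fun t => {x | x ∈ CsetB ∧ RA_F t.1 x ≠ x})
    (fun t => RA_card_moved t.1 t.2.2)
    (fun s t y x => x = RA_F s.1 y ∨ y = RA_F t.1 x ∨
      (RA_F s.1 y ∈ CsetB ∧ RA_F t.1 x ∈ CsetB ∧ RA_e (RA_F s.1 y) = RA_e (RA_F t.1 x)))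
    (by
      rintro s t y x (h | h | ⟨h1, h2, h3⟩)
      · exact Or.inr (Or.inl h)
      · exact Or.inl h
      · exact Or.inr (Or.inr ⟨h2, h1, h3.symm⟩))
    (by
      intro s t y
      have h1 : ({RA_F s.1 y} : Set (ℕ → Bool)).Countable := Set.countable_singleton _
      have h2 : (RA_F t.1 ⁻¹' {y}).Countable := (Set.countable_singleton _).preimage_of_injOn
        t.2.1.injOn
      have h3 : (RA_F t.1 ⁻¹' (SsetB (RA_e (RA_F s.1 y)))).Countable :=
        (RA_S_countable _).preimage_of_injOn t.2.1.injOn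
      refine (h1.union (h2.union h3)).mono ?_
      rintro x (h | h | ⟨_, h, h'⟩)
      · exact Or.inl h
      · exact Or.inr (Or.inl h.symm)
      · refine Or.inr (Or.inr ?_)
        rw [Set.mem_preimage, h']
        exact RA_mem_C h)
  let M : Set (ℕ → Bool) := {y | y ∈ CsetB ∧ ∀ t : T, y ≠ RA_F t.1 (x t)}
  have hxM : ∀ t, x t ∈ M := by
    intro t
    refine ⟨(hxA t).1, fun s hs => ?_⟩
    by_cases hst : s = t
    · subst hst
      exact (hxA s).2 hs.symm
    · exact hxb s t hst (Or.inl hs)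
  have hM : ∀ η : ℕ → Bool, (SsetB η \ M).Subsingleton := by
    have aux : ∀ η y, y ∈ SsetB η \ M → y ∈ CsetB ∧ RA_e y = η ∧ ∃ t : T, y = RA_F t.1 (x t) := by
      rintro η y ⟨h1, h2⟩
      have hC : y ∈ CsetB := Set.mem_iUnion.2 ⟨η, h1⟩
      refine ⟨hC, RA_e_of_mem h1, ?_⟩
      by_contra hcon
      exact h2 ⟨hC, fun t ht => hcon ⟨t, ht⟩⟩
    intro η y hy z hz
    obtain ⟨hyC, hye, s, rfl⟩ := aux η y hy
    obtain ⟨hzC, hze, t, rfl⟩ := aux η z hz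
    by_cases hst : s = t
    · rw [hst]
    · exact absurd (Or.inr (Or.inr ⟨hyC, hzC, hye.trans hze.symm⟩)) (hxb s t hst)
  refine ⟨M, fun y hy => hy.1, hM, ?_, ?_⟩
  · rintro η n s ⟨ν, hν, hs⟩
    obtain ⟨y, hy, hag⟩ := RA_dense hM ν n
    rw [RA_e_of_mem hν] at hy
    exact ⟨y, hy, fun k => by rw [hag k k.2, hs k]⟩
  · intro f hf hE z hz
    by_contra hne
    let φ : List Bool → Bool := fun l =>
      if h : ∃ σ ∈ M, List.ofFn (fun i : Fin l.length => σ i) = l then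
        f h.choose (l.length - 1) else false
    have hφ : ∀ σ ∈ M, RA_F φ σ = f σ := by
      intro σ hσ
      funext k
      have hex : ∃ τ ∈ M, List.ofFn (fun i : Fin (List.ofFn
          (fun i : Fin (k + 1) => σ i)).length => τ i) = List.ofFn (fun i : Fin (k + 1) => σ i) := by
        refine ⟨σ, hσ, ?_⟩
        apply List.ext_getElem <;> simp
      have h0 : RA_F φ σ k = f hex.choose k := by
        simp only [RA_F, φ]
        rw [dif_pos hex]
        simp
      rw [h0]
      obtain ⟨hτM, hτ⟩ := hex.choose_spec
      refine (hE _ hτM _ hσ (k + 1)).1 ?_ k (by omega)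
      intro j hj
      have := congrArg (fun l => l[j]?) hτ
      simpa [hj, List.getElem?_ofFn, -List.ofFn_succ] using this
    have hinj : Function.Injective (RA_F φ) := by
      intro σ τ h
      funext k
      obtain ⟨σ', hσ', h1⟩ := RA_dense hM σ (k + 1)
      obtain ⟨τ', hτ', h2⟩ := RA_dense hM τ (k + 1)
      rw [← h1 k (by omega), ← h2 k (by omega)]
      refine (hE _ hσ'.1 _ hτ'.1 (k + 1)).2 ?_ k (by omega)
      intro j hj
      rw [← hφ _ hσ'.1, ← hφ _ hτ'.1,
        RA_F_congr φ (fun i hi => h1 i (by omega)), RA_F_congr φ (fun i hi => h2 i (by omega)), h]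
    let t : T := ⟨φ, hinj, z, by rw [hφ z hz]; exact hne⟩
    have h1 := hf.mapsTo (hxM t)
    rw [← hφ _ (hxM t)] at h1
    exact h1.2 t rfl
end

section
/- The structure (C, (E_i)_{i∈ℕ}) is not rigid: there exists an E-preserving bijection from C onto C that is not the identity. -/
/-- Membership in `C` depends only on the odd coordinates. -/
theorem mem_CsetB_iff (σ : ℕ → Bool) :
    σ ∈ CsetB ↔ {n | σ (2 * n + 1) ≠ false}.Finite ∨ ∀ n, σ (2 * n + 1) = true := by
  simp only [CsetB, Set.mem_iUnion, SsetB, Set.mem_union, Set.mem_setOf_eq,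
    Set.mem_singleton_iff, DsetB]
  constructor
  · rintro ⟨η, ⟨_, h⟩ | h⟩
    · exact Or.inl h
    · right
      intro n
      rw [h]
      have : (2 * n + 1) % 2 ≠ 0 := by omega
      simp only [bfun, if_neg this]
  · intro h
    refine ⟨fun n => σ (2 * n), ?_⟩
    rcases h with h | h
    · exact Or.inl ⟨fun _ => rfl, h⟩
    · right
      funext k
      unfold bfun
      split_ifs with hk
      · congr 1
        omega
      · have := h (k / 2)
        rwa [show 2 * (k / 2) + 1 = k by omega] at this

/-- Flip the zeroth coordinate. -/
def flipZero (σ : ℕ → Bool) : ℕ → Bool := fun k => if k = 0 then !(σ k) else σ k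

theorem flipZero_flipZero (σ : ℕ → Bool) : flipZero (flipZero σ) = σ := by
  funext k
  by_cases hk : k = 0 <;> simp [flipZero, hk]

theorem flipZero_mem {σ : ℕ → Bool} (h : σ ∈ CsetB) : flipZero σ ∈ CsetB := by
  rw [mem_CsetB_iff] at h ⊢
  simpa [flipZero] using h

theorem flipZero_apply_eq_iff (σ τ : ℕ → Bool) (k : ℕ) :
    flipZero σ k = flipZero τ k ↔ σ k = τ k := by
  by_cases hk : k = 0 <;> simp [flipZero, hk]

/-- `(C, (E_i))` is not rigid: some `E`-preserving bijection of `C` onto itself is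
not the identity. -/
theorem CsetB_not_rigid :
    ∃ f : (ℕ → Bool) → (ℕ → Bool), Set.BijOn f CsetB CsetB ∧
      (∀ σ ∈ CsetB, ∀ τ ∈ CsetB, ∀ i : ℕ, Erel i σ τ ↔ Erel i (f σ) (f τ)) ∧
      ∃ x ∈ CsetB, f x ≠ x := by
  refine ⟨flipZero, ⟨fun σ h => flipZero_mem h, ?_, ?_⟩, ?_, fun _ => false, ?_, ?_⟩
  · intro σ _ τ _ h
    rw [← flipZero_flipZero σ, h, flipZero_flipZero]
  · intro σ h
    exact ⟨flipZero σ, flipZero_mem h, flipZero_flipZero σ⟩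
  · intro σ _ τ _ i
    simp only [Erel, flipZero_apply_eq_iff]
  · rw [mem_CsetB_iff]
    simp
  · intro h
    have := congrFun h 0
    simp [flipZero] at this
end

section
/- Let A, B ⊆ C. Then the partial order 𝒫(A,B) satisfies the countable chain condition: every set of pairwise incompatible conditions is countable. -/
/-- A condition in the forcing `𝒫(A,B)`: a finite partial injection from `A` to `B`
(given by its graph) preserving each `E_i` and each predicate `S_η`. -/
structure CondB (A B : Set (ℕ → Bool)) where
  graph : Set ((ℕ → Bool) × (ℕ → Bool))
  finite : graph.Finite
  dom_sub : ∀ ⦃x y⦄, (x, y) ∈ graph → x ∈ A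
  ran_sub : ∀ ⦃x y⦄, (x, y) ∈ graph → y ∈ B
  functional : ∀ ⦃x y y'⦄, (x, y) ∈ graph → (x, y') ∈ graph → y = y'
  injective : ∀ ⦃x x' y⦄, (x, y) ∈ graph → (x', y) ∈ graph → x = x'
  epres : ∀ ⦃x y x' y'⦄ (i : ℕ), (x, y) ∈ graph → (x', y') ∈ graph →
    (Erel i x x' ↔ Erel i y y')
  spres : ∀ ⦃x y⦄ (η : ℕ → Bool), (x, y) ∈ graph → (x ∈ SsetB η ↔ y ∈ SsetB η)

/-- Two conditions are compatible if some condition extends both. -/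
def CompatibleB {A B : Set (ℕ → Bool)} (p q : CondB A B) : Prop :=
  ∃ r : CondB A B, p.graph ⊆ r.graph ∧ q.graph ⊆ r.graph

def oddB (x : ℕ → Bool) : ℕ → Bool := fun n => x (2 * n + 1)

def truncB (n : ℕ) (x : ℕ → Bool) : ℕ → Bool := fun k => if k < n then x k else false

def QsetB : Set (ℕ → Bool) := {s | {n | s n ≠ false}.Finite} ∪ {fun _ => true}

theorem QsetB_countable : QsetB.Countable := by
  refine Set.Countable.union ?_ (Set.countable_singleton _)
  have h : {t : Set ℕ | t.Finite}.Countable := Set.Countable.ofPred_finite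
  refine Set.MapsTo.countable_of_injOn (f := fun s : ℕ → Bool => {n | s n ≠ false})
    (t := {t : Set ℕ | t.Finite}) (fun s hs => hs) ?_ h
  intro s _ t _ hst
  funext n
  have h2 : (s n ≠ false) ↔ (t n ≠ false) := by
    have := congrArg (fun u : Set ℕ => n ∈ u) hst
    simpa using this
  cases hs : s n <;> cases ht : t n <;> simp_all

theorem truncB_mem (n : ℕ) (x : ℕ → Bool) : truncB n x ∈ QsetB := by
  left
  refine (Set.finite_lt_nat n).subset ?_
  intro k hk
  by_contra h
  have h' : ¬ k < n := h
  exact hk (by simp [truncB, h'])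

theorem truncB_eq {n : ℕ} {x y : ℕ → Bool} (h : truncB n x = truncB n y) : Erel n x y := by
  intro k hk
  have := congrFun h k
  simpa [truncB, hk] using this

theorem SsetB_even {η x : ℕ → Bool} (h : x ∈ SsetB η) (n : ℕ) : x (2 * n) = η n := by
  rcases h with h | h
  · exact h.1 n
  · rw [Set.mem_singleton_iff.1 h]; simp [bfun]

theorem oddB_mem {x : ℕ → Bool} (h : x ∈ CsetB) : oddB x ∈ QsetB := by
  obtain ⟨η, h⟩ := Set.mem_iUnion.1 h
  rcases h with h | h
  · left; exact h.2
  · right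
    rw [Set.mem_singleton_iff.1 h]
    rw [Set.mem_singleton_iff]
    funext n
    have : (2 * n + 1) % 2 ≠ 0 := by omega
    simp [oddB, bfun]

theorem CondB.even {A B : Set (ℕ → Bool)} (hAC : A ⊆ CsetB) (p : CondB A B) {x y : ℕ → Bool}
    (h : (x, y) ∈ p.graph) (n : ℕ) : x (2 * n) = y (2 * n) := by
  obtain ⟨η, hx⟩ := Set.mem_iUnion.1 (hAC (p.dom_sub h))
  rw [SsetB_even hx, SsetB_even ((p.spres η h).1 hx)]

theorem Erel_eq {x y : ℕ → Bool} (h : ∀ i, Erel i x y) : x = y :=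
  funext fun k => h (k + 1) k (Nat.lt_succ_self k)

theorem CondB.exists_sep {A B : Set (ℕ → Bool)} (p : CondB A B) :
    ∃ n, ∀ a ∈ p.graph, ∀ b ∈ p.graph, Erel n a.1 b.1 → a.1 = b.1 := by
  have : ∀ᶠ n in Filter.atTop, ∀ a ∈ p.graph, ∀ b ∈ p.graph, Erel n a.1 b.1 → a.1 = b.1 := by
    rw [Filter.eventually_all_finite p.finite]
    intro a _
    rw [Filter.eventually_all_finite p.finite]
    intro b _
    by_cases hab : a.1 = b.1
    · exact Filter.Eventually.of_forall fun _ _ => hab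
    · have : ∃ i, ¬ Erel i a.1 b.1 := by
        by_contra! h
        exact hab (Erel_eq h)
      obtain ⟨i, hi⟩ := this
      filter_upwards [Filter.eventually_ge_atTop i] with n hn h
      exact absurd (fun k hk => h k (lt_of_lt_of_le hk hn)) hi
  exact this.exists

def codeB (n : ℕ) (a : (ℕ → Bool) × (ℕ → Bool)) :
    ((ℕ → Bool) × (ℕ → Bool)) × ((ℕ → Bool) × (ℕ → Bool)) :=
  ((truncB n a.1, truncB n a.2), (oddB a.1, oddB a.2))

theorem Erel_symm {i : ℕ} {x y : ℕ → Bool} (h : Erel i x y) : Erel i y x :=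
  fun k hk => (h k hk).symm

theorem Erel_trans {i : ℕ} {x y z : ℕ → Bool} (h : Erel i x y) (h' : Erel i y z) : Erel i x z :=
  fun k hk => (h k hk).trans (h' k hk)

theorem Erel_mono {i j : ℕ} (hij : i ≤ j) {x y : ℕ → Bool} (h : Erel j x y) : Erel i x y :=
  fun k hk => h k (lt_of_lt_of_le hk hij)

theorem Erel_transfer {x y x' y' : ℕ → Bool} {i : ℕ} (hy : oddB y = oddB y')
    (h : ∀ n, x (2 * n) = y (2 * n)) (h' : ∀ n, x' (2 * n) = y' (2 * n))
    (he : Erel i x x') : Erel i y y' := by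
  intro k hk
  rcases Nat.even_or_odd' k with ⟨m, rfl | rfl⟩
  · rw [← h, ← h']; exact he _ hk
  · exact congrFun hy m

theorem cross_epres {A B : Set (ℕ → Bool)} (hAC : A ⊆ CsetB) (p q : CondB A B) (n : ℕ)
    (hsep : ∀ a ∈ p.graph, ∀ b ∈ p.graph, Erel n a.1 b.1 → a.1 = b.1)
    (hcode : codeB n '' p.graph = codeB n '' q.graph) {x y x' y' : ℕ → Bool} (i : ℕ)
    (h : (x, y) ∈ p.graph) (h' : (x', y') ∈ q.graph) : Erel i x x' ↔ Erel i y y' := by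
  have hm : codeB n (x', y') ∈ codeB n '' p.graph := hcode ▸ Set.mem_image_of_mem _ h'
  obtain ⟨⟨u, v⟩, huv, hc⟩ := hm
  simp only [codeB, Prod.mk.injEq] at hc
  obtain ⟨⟨h1, h2⟩, h3, h4⟩ := hc
  have h1 := truncB_eq h1
  have h2 := truncB_eq h2
  by_cases hx : Erel n x u
  · have hxu : x = u := hsep _ h _ huv hx
    subst hxu
    have hyv : y = v := p.functional h huv
    subst hyv
    have e := p.even hAC h
    have e' := q.even hAC h'
    exact ⟨Erel_transfer h4 e e', Erel_transfer h3 (fun n => (e n).symm) (fun n => (e' n).symm)⟩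
  · have hy : ¬ Erel n y v := fun hy => hx ((p.epres n h huv).2 hy)
    rcases le_total i n with hi | hi
    · have h1 := Erel_mono hi h1
      have h2 := Erel_mono hi h2
      have := p.epres i h huv
      exact ⟨fun e => Erel_trans (this.1 (Erel_trans e (Erel_symm h1))) h2,
        fun e => Erel_trans (this.2 (Erel_trans e (Erel_symm h2))) h1⟩
    · exact ⟨fun e => absurd (Erel_trans (Erel_mono hi e) (Erel_symm h1)) hx,
        fun e => absurd (Erel_trans (Erel_mono hi e) (Erel_symm h2)) hy⟩

theorem compat_of_code {A B : Set (ℕ → Bool)} (hAC : A ⊆ CsetB) (p q : CondB A B) (n : ℕ)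
    (hsep : ∀ a ∈ p.graph, ∀ b ∈ p.graph, Erel n a.1 b.1 → a.1 = b.1)
    (hcode : codeB n '' p.graph = codeB n '' q.graph) : CompatibleB p q := by
  have key : ∀ ⦃x y x' y'⦄ (i : ℕ), (x, y) ∈ p.graph ∪ q.graph → (x', y') ∈ p.graph ∪ q.graph →
      (Erel i x x' ↔ Erel i y y') := by
    intro x y x' y' i h h'
    rcases h with h | h <;> rcases h' with h' | h'
    · exact p.epres i h h'
    · exact cross_epres hAC p q n hsep hcode i h h'
    · have := cross_epres hAC p q n hsep hcode i h' h
      exact ⟨fun e => Erel_symm (this.1 (Erel_symm e)), fun e => Erel_symm (this.2 (Erel_symm e))⟩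
    · exact q.epres i h h'
  refine ⟨⟨p.graph ∪ q.graph, p.finite.union q.finite, ?_, ?_, ?_, ?_, key, ?_⟩,
    Set.subset_union_left, Set.subset_union_right⟩
  · rintro x y (h | h)
    · exact p.dom_sub h
    · exact q.dom_sub h
  · rintro x y (h | h)
    · exact p.ran_sub h
    · exact q.ran_sub h
  · intro x y y' h h'
    exact Erel_eq fun i => (key i h h').1 fun _ _ => rfl
  · intro x x' y h h'
    exact Erel_eq fun i => (key i h h').2 fun _ _ => rfl
  · rintro x y η (h | h)
    · exact p.spres η h
    · exact q.spres η h

/-- For `A, B ⊆ C`, the forcing `𝒫(A,B)` satisfies the countable chain condition: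
every set of pairwise incompatible conditions is countable. -/
theorem condB_ccc (A B : Set (ℕ → Bool)) (hAC : A ⊆ CsetB) (hBC : B ⊆ CsetB) :
    ∀ S : Set (CondB A B),
      (∀ p ∈ S, ∀ q ∈ S, p ≠ q → ¬ CompatibleB p q) → S.Countable := by
  intro S hS
  choose N hN using fun p : CondB A B => p.exists_sep
  have hQ := QsetB_countable
  have hT := Set.countable_setOf_finite_subset ((hQ.prod hQ).prod (hQ.prod hQ))
  refine Set.MapsTo.countable_of_injOn (f := fun p : CondB A B => (N p, codeB (N p) '' p.graph))
    ?_ ?_ ((Set.countable_univ (α := ℕ)).prod hT)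
  · intro p _
    refine ⟨Set.mem_univ _, p.finite.image _, ?_⟩
    rintro _ ⟨⟨x, y⟩, h, rfl⟩
    exact ⟨⟨truncB_mem _ _, truncB_mem _ _⟩,
      oddB_mem (hAC (p.dom_sub h)), oddB_mem (hBC (p.ran_sub h))⟩
  · intro p hp q hq hpq
    by_contra hne
    simp only [Prod.mk.injEq] at hpq
    obtain ⟨h1, h2⟩ := hpq
    rw [← h1] at h2
    exact hS p hp q hq hne (compat_of_code hAC p q (N p) (hN p) h2)
end

section
/- There exists an amenable subset M₀ ⊆ C, with S_η \ M₀ having at most one element for every η, such that there is no E-preserving bijection from M₀ onto C; that is, M₀ and C are non-isomorphic as structures with the relations (E_i)_{i∈ℕ}. -/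
/-- The first `n` values of `σ`, as a list. -/
def pre (σ : ℕ → Bool) (n : ℕ) : List Bool := (List.range n).map σ

theorem pre_eq_iff (σ τ : ℕ → Bool) (n : ℕ) : pre σ n = pre τ n ↔ Erel n σ τ := by
  simp [pre, Erel]

theorem pre_len {σ τ : ℕ → Bool} {n m : ℕ} (h : pre σ n = pre τ m) : n = m := by
  have := congrArg List.length h
  simpa [pre] using this

/-- The map on Cantor space coded by `η`. -/
def Phi (η σ : ℕ → Bool) : ℕ → Bool := fun n => η (Encodable.encode (pre σ (n + 1)))

theorem Phi_congr (η : ℕ → Bool) {σ τ : ℕ → Bool} {k : ℕ} (h : Erel k σ τ) :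
    Erel k (Phi η σ) (Phi η τ) := by
  intro n hn
  have : pre σ (n + 1) = pre τ (n + 1) :=
    (pre_eq_iff _ _ _).2 (fun j hj => h j (by omega))
  simp [Phi, this]

theorem exists_code (M : Set (ℕ → Bool)) (f : (ℕ → Bool) → (ℕ → Bool))
    (hf : ∀ σ ∈ M, ∀ τ ∈ M, ∀ i : ℕ, Erel i σ τ ↔ Erel i (f σ) (f τ)) :
    ∃ η, ∀ σ ∈ M, Phi η σ = f σ := by
  classical
  refine ⟨fun m => decide (∃ σ ∈ M, ∃ n, m = Encodable.encode (pre σ (n + 1)) ∧ f σ n = true), ?_⟩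
  intro σ hσ
  funext n
  rw [Bool.eq_iff_iff]
  simp only [Phi, decide_eq_true_eq]
  constructor
  · rintro ⟨τ, hτ, m, h, h2⟩
    have h := Encodable.encode_injective h
    have hm := pre_len h
    obtain rfl : n = m := by omega
    rw [pre_eq_iff, hf σ hσ τ hτ] at h
    rw [h n (by omega), h2]
  · intro h
    exact ⟨σ, hσ, n, rfl, h⟩

theorem mem_S_even {η σ : ℕ → Bool} (h : σ ∈ SsetB η) (n : ℕ) : σ (2 * n) = η n := by
  rcases h with h | h
  · exact h.1 n
  · rw [Set.mem_singleton_iff] at h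
    subst h
    simp [bfun]

theorem S_disj {η ζ σ : ℕ → Bool} (h : σ ∈ SsetB η) (h' : σ ∈ SsetB ζ) : η = ζ := by
  funext n
  rw [← mem_S_even h, mem_S_even h']

/-- Keep `ν` below `n` and on even places, put `b` at `2n+1`, and `0` elsewhere. -/
def modif (ν : ℕ → Bool) (n : ℕ) (b : Bool) : ℕ → Bool := fun k =>
  if k < n ∨ k % 2 = 0 then ν k else if k = 2 * n + 1 then b else false

theorem modif_mem {η ν : ℕ → Bool} (h : ν ∈ SsetB η) (n : ℕ) (b : Bool) :
    modif ν n b ∈ SsetB η := by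
  left
  refine ⟨fun m => ?_, ?_⟩
  · simp [modif, mem_S_even h]
  · refine (Set.finite_le_nat n).subset ?_
    intro m hm
    by_contra hlt
    simp only [Set.mem_setOf_eq, not_le] at hlt
    apply hm
    have h1 : ¬ (2 * m + 1 < n ∨ (2 * m + 1) % 2 = 0) := by omega
    have h2 : ¬ (2 * m + 1 = 2 * n + 1) := by omega
    simp only [modif, if_neg h1, if_neg h2]

theorem modif_agree (ν : ℕ → Bool) (n : ℕ) (b : Bool) : Erel n (modif ν n b) ν := by
  intro k hk
  simp [modif, hk]

theorem modif_at (ν : ℕ → Bool) (n : ℕ) (b : Bool) : modif ν n b (2 * n + 1) = b := by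
  have h1 : ¬ (2 * n + 1 < n ∨ (2 * n + 1) % 2 = 0) := by omega
  simp only [modif, if_neg h1, if_true]

theorem exists_other {η ν : ℕ → Bool} (h : ν ∈ SsetB η) (n : ℕ) (x : ℕ → Bool) :
    ∃ ν' ∈ SsetB η, ν' ≠ x ∧ Erel n ν' ν := by
  refine ⟨modif ν n (!(x (2 * n + 1))), modif_mem h _ _, ?_, modif_agree _ _ _⟩
  intro he
  have := congrFun he (2 * n + 1)
  rw [modif_at] at this
  simp at this

/-- There is an amenable `M₀ ⊆ C`, missing at most one point of each `S_η`, that is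
not isomorphic to `C` as a structure with the relations `E_i`: no `E`-preserving
bijection maps `M₀` onto `C`. -/
theorem exists_amenable_not_isomorphic :
    ∃ M₀ : Set (ℕ → Bool), M₀ ⊆ CsetB ∧
      (∀ η : ℕ → Bool, (SsetB η \ M₀).Subsingleton) ∧
      AmenableB M₀ ∧
      ¬ ∃ f : (ℕ → Bool) → (ℕ → Bool), Set.BijOn f M₀ CsetB ∧
          ∀ σ ∈ M₀, ∀ τ ∈ M₀, ∀ i : ℕ, Erel i σ τ ↔ Erel i (f σ) (f τ) := by
  classical
  have hx : ∀ η : ℕ → Bool, ∃ x ∈ SsetB η,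
      ((∃ y ∈ SsetB η, Phi η y ∈ CsetB) → Phi η x ∈ CsetB) := by
    intro η
    by_cases h : ∃ y ∈ SsetB η, Phi η y ∈ CsetB
    · obtain ⟨y, hy, hy'⟩ := h
      exact ⟨y, hy, fun _ => hy'⟩
    · exact ⟨bfun η, Or.inr rfl, fun h' => absurd h' h⟩
  choose x hxS hxC using hx
  have hmem : ∀ η σ, σ ∈ SsetB η → σ ≠ x η → σ ∈ {σ | σ ∈ CsetB ∧ ∀ η, σ ≠ x η} := by
    intro η σ hσ hne
    refine ⟨Set.mem_iUnion.2 ⟨η, hσ⟩, fun ζ hz => ?_⟩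
    have : η = ζ := S_disj hσ (hz ▸ hxS ζ)
    subst this
    exact hne hz
  refine ⟨{σ | σ ∈ CsetB ∧ ∀ η, σ ≠ x η}, fun σ h => h.1, ?_, ?_, ?_⟩
  · have key : ∀ η, ∀ σ ∈ SsetB η \ {σ | σ ∈ CsetB ∧ ∀ η, σ ≠ x η}, σ = x η := by
      intro η σ hσ
      by_contra hne
      exact hσ.2 (hmem η σ hσ.1 hne)
    intro η σ hσ τ hτ
    rw [key η σ hσ, key η τ hτ]
  · rintro η n s ⟨ν, hν, hs⟩
    obtain ⟨ν', h1, h2, h3⟩ := exists_other hν n (x η)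
    exact ⟨ν', ⟨hmem η ν' h1 h2, h1⟩, fun k => (h3 k k.2).trans (hs k)⟩
  · rintro ⟨f, hbij, hf⟩
    obtain ⟨η, hη⟩ := exists_code _ f hf
    obtain ⟨τ, h1, h2, -⟩ := exists_other (hxS η) 0 (x η)
    have hτM := hmem η τ h1 h2
    have hC : Phi η (x η) ∈ CsetB :=
      hxC η ⟨τ, h1, by rw [hη τ hτM]; exact hbij.mapsTo hτM⟩
    obtain ⟨ρ, hρ, hρe⟩ := hbij.surjOn hC
    apply hρ.2 η
    funext k
    obtain ⟨ν, g1, g2, g3⟩ := exists_other (hxS η) (k + 1) (x η)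
    have hνM := hmem η ν g1 g2
    have h4 := Phi_congr η g3
    rw [hη ν hνM, ← hρe, ← hf ν hνM ρ hρ] at h4
    rw [← h4 k (by omega), g3 k (by omega)]
end

section
/- Let L₁ be the first-order language whose binary relation symbols are indexed by ℕ and whose unary relation symbols are indexed by the functions ℕ → Bool (and which has no other symbols), and let M₁ be the L₁-structure with universe C in which the i-th binary relation symbol is interpreted as E_i restricted to C and the η-th unary relation symbol is interpreted as S_η. Then for every elementary substructure N of M₁, the underlying set of N, viewed as a subset of C, is amenable. -/
/-- The language `L₁` with binary relation symbols indexed by `ℕ` and unary relation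
symbols indexed by `ℕ → Bool`, and no other symbols. -/
def L19 : FirstOrder.Language where
  Functions := fun _ => Empty
  Relations := fun n =>
    match n with
    | 1 => ℕ → Bool
    | 2 => ℕ
    | _ => Empty

/-- The `L₁`-structure `M₁` with universe `C`, interpreting the `i`-th binary relation
symbol as `E_i` and the `η`-th unary relation symbol as `S_η`. -/
instance M19 : L19.Structure ↥CsetB where
  funMap := fun {n} f _ => Empty.elim f
  RelMap := fun {n} =>
    match n with
    | 0 => fun r _ => Empty.elim r
    | 1 => fun (η : ℕ → Bool) x => ((x 0 : ↥CsetB) : ℕ → Bool) ∈ SsetB η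
    | 2 => fun (i : ℕ) x => Erel i ((x 0 : ↥CsetB) : ℕ → Bool) ((x 1 : ↥CsetB) : ℕ → Bool)
    | _ + 3 => fun r _ => Empty.elim r

/-- The underlying set of every elementary substructure of `M₁` is amenable. -/
theorem elementarySubstructure_amenable (N : L19.ElementarySubstructure ↥CsetB) :
    AmenableB (Subtype.val '' (N : Set ↥CsetB)) := by
  classical
  intro η n s ⟨ν, hν, hs⟩
  by_contra hcon
  let T := {t : Fin n → Bool // ∃ x : N, ((x : ↥CsetB) : ℕ → Bool) ∈ SsetB η ∧
    ∀ k : Fin n, ((x : ↥CsetB) : ℕ → Bool) k = t k}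
  have hT : ∀ t : T, ∃ x : N, ((x : ↥CsetB) : ℕ → Bool) ∈ SsetB η ∧
    ∀ k : Fin n, ((x : ↥CsetB) : ℕ → Bool) k = t.1 k := fun t => t.2
  choose v hvS hv using hT
  let R1 : L19.Relations 1 := η
  let R2 : L19.Relations 2 := n
  let φ : L19.BoundedFormula T 1 :=
    (FirstOrder.Language.Relations.boundedFormula₁ R1
        (FirstOrder.Language.Term.var (Sum.inr 0))) ⊓
      FirstOrder.Language.BoundedFormula.iInf (fun t : T =>
        FirstOrder.Language.BoundedFormula.not (FirstOrder.Language.Relations.boundedFormula₂ R2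
          (FirstOrder.Language.Term.var (Sum.inr 0))
          (FirstOrder.Language.Term.var (Sum.inl t))))
  let ψ : L19.Formula T := φ.ex
  have hM : ψ.Realize (N.subtype ∘ v) := by
    refine FirstOrder.Language.BoundedFormula.realize_ex.2
      ⟨⟨ν, Set.mem_iUnion.2 ⟨η, hν⟩⟩, ?_⟩
    simp only [φ, FirstOrder.Language.BoundedFormula.realize_inf,
      FirstOrder.Language.BoundedFormula.realize_iInf,
      FirstOrder.Language.BoundedFormula.realize_not,
      FirstOrder.Language.BoundedFormula.realize_rel₁,
      FirstOrder.Language.BoundedFormula.realize_rel₂]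
    refine ⟨hν, fun t ht => hcon ?_⟩
    have ht' : Erel n ν ((v t : ↥CsetB) : ℕ → Bool) := ht
    exact ⟨_, ⟨⟨(v t : ↥CsetB), (v t).2, rfl⟩, hvS t⟩,
      fun k => (ht' k k.2).symm.trans (hs k)⟩
  have hN : ψ.Realize v := (N.subtype.map_formula ψ v).1 hM
  obtain ⟨y, hy⟩ := FirstOrder.Language.BoundedFormula.realize_ex.1 hN
  simp only [φ, FirstOrder.Language.BoundedFormula.realize_inf,
      FirstOrder.Language.BoundedFormula.realize_iInf,
      FirstOrder.Language.BoundedFormula.realize_not,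
      FirstOrder.Language.BoundedFormula.realize_rel₁,
      FirstOrder.Language.BoundedFormula.realize_rel₂] at hy
  obtain ⟨hy1, hy2⟩ := hy
  have hyS : ((y : ↥CsetB) : ℕ → Bool) ∈ SsetB η := hy1
  let t : T := ⟨fun k => ((y : ↥CsetB) : ℕ → Bool) k, y, hyS, fun _ => rfl⟩
  refine hy2 t ?_
  have : Erel n ((y : ↥CsetB) : ℕ → Bool) ((v t : ↥CsetB) : ℕ → Bool) :=
    fun k hk => (hv t ⟨k, hk⟩).symm
  exact this
end
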